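/- arXiv:math/0504581 — 2 statements merged into one kernel-verified Lean document; each statement's English description precedes it below -/
import Mathlib

section
/- Let K = F_2(x)(y) where y satisfies y^2 + x·y + x(x^4 + x + 1) = 0 (this quadratic polynomial in y is irreducible over F_2(x)). Then the ideal class group Cl(O_K), where O_K is the integral closure of F_2[x] in K, is cyclic of order 2. -/
/-!
The integral closure of `𝔽₂[x]` is `R = 𝔽₂[x] ⊕ 𝔽₂[x] y`: an integral `u + v y` has polynomial
trace and norm, and since `x` divides `x (x ^ 4 + x + 1)` exactly once this forces `u` and `v` to be
polynomials (`coeff_integral`, `isModel_root`).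

The class group is then found by reduction of binary quadratic forms. Up to a scalar every nonzero
ideal is `(a, b + y)` with `a` dividing the norm of `b + y` (`exists_normal_form`). Reducing `b`
modulo `a` and multiplying by the conjugate of `b + y` replaces `a` by a polynomial of smaller degree
as long as `deg a ≥ 3` (`inTrivialOrClassOf_of_dvd`). For `deg a ≤ 2` the places `x + 1` and
`x ^ 2 + x + 1` are inert and `x` is ramified, which leaves only the unit ideal and `(x, y)`
(`eq_one_or_of_natDegree_le_two`). Finally `(x, y)` is not principal, because the norm of `a + b y`
has degree at least `5` when `b ≠ 0` and is a square when `b = 0` (`not_principal`). Hence there are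
exactly two classes.
-/

open Polynomial

/-- The class of the ideal `I` is trivial or equals that of `Q`. Classes are compared by scaling
with nonzero principal ideals, so no invertibility of the ideals is needed. -/
def InTrivialOrClassOf {R : Type*} [CommRing R] (Q I : Ideal R) : Prop :=
  ∃ u v : R, u ≠ 0 ∧ v ≠ 0 ∧
    (Ideal.span {u} * I = Ideal.span {v} ∨ Ideal.span {u} * I = Ideal.span {v} * Q)

theorem InTrivialOrClassOf.trans {R : Type*} [CommRing R] [IsDomain R] {Q I J : Ideal R}
    {s t : R} (hs : s ≠ 0) (ht : t ≠ 0)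
    (e : Ideal.span {s} * I = Ideal.span {t} * J) (hJ : InTrivialOrClassOf Q J) :
    InTrivialOrClassOf Q I := by
  obtain ⟨u, v, hu, hv, h⟩ := hJ
  refine ⟨u * s, t * v, mul_ne_zero hu hs, mul_ne_zero ht hv, ?_⟩
  simp only [← Ideal.span_singleton_mul_span_singleton]
  rw [mul_assoc, e, mul_left_comm, mul_assoc]
  exact h.imp (fun h => by rw [h]) (fun h => by rw [h])

theorem span_pair_congr {R : Type*} [CommRing R] (a b c y : R) :
    Ideal.span {a, b + a * c + y} = Ideal.span {a, b + y} := by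
  rw [show b + a * c + y = (b + y) + c * a by ring, Ideal.span_pair_add_mul_left]

theorem singleton_mul_pair {R : Type*} [CommRing R] (a b c : R) :
    Ideal.span {a} * Ideal.span {b, c} = Ideal.span {a * b, a * c} := by
  rw [Ideal.span_mul_span', Set.singleton_mul, Set.image_pair]

/-! ### The norm form over `𝔽₂[x]` -/

/-- The constant term `x (x ^ 4 + x + 1)` of the quadratic equation for `y`. -/
noncomputable def cc : (ZMod 2)[X] := X * (X ^ 4 + X + 1)

/-- The norm of `a + b y`, written with the signs valid for `y ^ 2 + x y + cc = 0` over any ring,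
so that the identities below follow without using characteristic two. -/
noncomputable def nm (a b : (ZMod 2)[X]) : (ZMod 2)[X] := a ^ 2 - a * b * X + b ^ 2 * cc

/-- Multiplicativity of the norm; the arguments on the left are the coordinates of the product
`(a + b y) (c + d y)`. -/
theorem nm_mul (a b c d : (ZMod 2)[X]) :
    nm (a * c - b * d * cc) (a * d + b * c - b * d * X) = nm a b * nm c d := by
  simp only [nm]; ring

theorem cc_natDegree : cc.natDegree = 5 := by unfold cc; compute_degree!

/-- The degrees of `a ^ 2` and `b ^ 2 cc` have opposite parities, so they cannot cancel, and the
cross term `a b x` has degree below their maximum. -/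
theorem five_le_natDegree_nm (a : (ZMod 2)[X]) {b : (ZMod 2)[X]} (hb : b ≠ 0) :
    5 ≤ (nm a b).natDegree := by
  have hc : (b ^ 2 * cc).natDegree = 2 * b.natDegree + 5 := by
    rw [natDegree_mul (pow_ne_zero _ hb) (by rintro h; simpa [h] using cc_natDegree), natDegree_pow,
      cc_natDegree]
  have hm : (a * b * X).natDegree ≤ a.natDegree + b.natDegree + 1 := by
    refine natDegree_mul_le.trans ?_
    have := natDegree_mul_le (p := a) (q := b)
    simp only [natDegree_X]; omega
  have ha : (a ^ 2).natDegree = 2 * a.natDegree := natDegree_pow _ _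
  unfold nm
  rcases Nat.lt_or_ge (b.natDegree + 2) a.natDegree with hlt | hge
  · rw [natDegree_add_eq_left_of_natDegree_lt, natDegree_sub_eq_left_of_natDegree_lt] <;>
      [omega; omega; skip]
    rw [natDegree_sub_eq_left_of_natDegree_lt] <;> omega
  · rw [natDegree_add_eq_right_of_natDegree_lt]
    · omega
    · refine (natDegree_sub_le _ _).trans_lt ?_
      rw [max_lt_iff]; omega

/-- The place `x = 1` is inert: `T ^ 2 + T + 1` has no root in `𝔽₂`. -/
theorem not_X_add_one_dvd (b : (ZMod 2)[X]) : ¬ (X + 1 ∣ nm b 1) := by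
  rintro ⟨q, hq⟩
  have := congrArg (eval 1) hq
  simp only [nm, cc, eval_add, eval_sub, eval_mul, eval_pow, eval_X, eval_one] at this
  generalize eval 1 b = t at this
  generalize eval 1 q = s at this
  revert s t
  decide

theorem X_dvd_of_X_dvd_nm {b : (ZMod 2)[X]} (h : X ∣ nm b 1) : X ∣ b := by
  rw [X_dvd_iff, coeff_zero_eq_eval_zero] at *
  simpa [nm, cc] using h

/-- No primitive ideal has norm `x ^ 2`: the place `x = 0` is ramified. -/
theorem not_X_sq_dvd (b : (ZMod 2)[X]) : ¬ (X ^ 2 ∣ nm b 1) := by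
  intro h
  obtain ⟨b, rfl⟩ := X_dvd_of_X_dvd_nm ((dvd_pow_self X two_ne_zero).trans h)
  obtain ⟨q, hq⟩ := h
  have h1 : (X : (ZMod 2)[X]) * (X * (q - b ^ 2 + b - X ^ 3 - 1)) = X * 1 := by
    simp only [nm, cc] at hq
    linear_combination -hq
  have h2 := mul_left_cancel₀ X_ne_zero h1
  simpa using congrArg (eval 0) h2

/-- The place `x ^ 2 + x + 1` is inert. The four residues `b` are checked by explicit division. -/
theorem not_inert_dvd (b : (ZMod 2)[X]) (hb : b.natDegree ≤ 1) : ¬ (X ^ 2 + X + 1 ∣ nm b 1) := by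
  intro h
  obtain ⟨s, t, rfl⟩ := exists_eq_X_add_C_of_natDegree_le_one hb
  have key : ∀ q r : (ZMod 2)[X], eval 1 r = 1 → r.natDegree ≤ 1 →
      nm (C s * X + C t) 1 = (X ^ 2 + X + 1) * q + r → False := by
    intro q r hr hd he
    rw [he] at h
    have h1 := (dvd_add_right (dvd_mul_right _ _)).1 h
    have h2 := natDegree_le_of_dvd h1 (by rintro rfl; simp at hr)
    have h3 : (X ^ 2 + X + 1 : (ZMod 2)[X]).natDegree = 2 := by compute_degree!
    omega
  have h01 : ∀ t : ZMod 2, t = 0 ∨ t = 1 := by decide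
  have e1 : (-1 - 2 : ZMod 2) = 1 := by decide
  have e2 : (-2 - 1 : ZMod 2) = 1 := by decide
  have e3 : (-1 : ZMod 2) = 1 := by decide
  rcases h01 s with rfl | rfl <;> rcases h01 t with rfl | rfl
  · exact key (X ^ 3 - X ^ 2 + 2) (-X - 2) (by simpa using e1) (by compute_degree)
      (by simp only [nm, cc, C_0]; ring)
  · exact key (X ^ 3 - X ^ 2 + 2) (-2 * X - 1) (by simpa using e2) (by compute_degree)
      (by simp only [nm, cc, C_0, C_1]; ring)
  · exact key (X ^ 3 - X ^ 2 + 2) (-X - 2) (by simpa using e1) (by compute_degree)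
      (by simp only [nm, cc, C_0, C_1]; ring)
  · exact key (X ^ 3 - X ^ 2 + 2) (-1) (by simp [e3]) (by simp)
      (by simp only [nm, cc, C_1]; ring)

/-- The reduced ideals `(a, b + y)` with `deg a ≤ 2` are the unit ideal and `(x, y)`. -/
theorem eq_one_or_of_natDegree_le_two {a b : (ZMod 2)[X]} (ha : a ≠ 0) (ha2 : a.natDegree ≤ 2)
    (hb : b.degree < a.degree)
    (hd : a ∣ nm b 1) : a = 1 ∨ (a = X ∧ b = 0) := by
  have h2 : (2 : (ZMod 2)[X]) = 0 := by exact_mod_cast CharP.cast_eq_zero (ZMod 2)[X] 2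
  have h01 : ∀ t : ZMod 2, t = 0 ∨ t = 1 := by decide
  have hform : a = C (a.coeff 2) * X ^ 2 + C (a.coeff 1) * X + C (a.coeff 0) :=
    eq_quadratic_of_degree_le_two (natDegree_le_iff_degree_le.1 ha2)
  have no_fac : ∀ q, a ≠ (X + 1) * q := by
    rintro q rfl
    exact not_X_add_one_dvd b ((dvd_mul_right _ _).trans hd)
  rcases h01 (a.coeff 2) with c2 | c2 <;> rcases h01 (a.coeff 1) with c1 | c1 <;>
    rcases h01 (a.coeff 0) with c0 | c0 <;> rw [c2, c1, c0] at hform <;>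
    simp only [C_0, C_1, zero_mul, one_mul, zero_add, add_zero] at hform
  · exact absurd hform ha
  · exact Or.inl hform
  · refine Or.inr ⟨hform, ?_⟩
    subst hform
    exact eq_zero_of_dvd_of_degree_lt (X_dvd_of_X_dvd_nm hd) hb
  · exact absurd (hform.trans (by ring)) (no_fac 1)
  · subst hform
    exact absurd hd (not_X_sq_dvd b)
  · exact absurd (hform.trans (by linear_combination -X * h2)) (no_fac (X + 1))
  · exact absurd (hform.trans (by ring)) (no_fac X)
  · subst hform
    refine absurd hd (not_inert_dvd b ?_)
    rw [show (X ^ 2 + X + 1 : (ZMod 2)[X]).degree = 2 by compute_degree!] at hb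
    rcases eq_or_ne b 0 with rfl | hb0
    · simp
    · exact Nat.lt_succ_iff.1 ((natDegree_lt_iff_degree_lt hb0).2 hb)

/-- `R` is the free `𝔽₂[x]`-module on `1, y`, where `y ^ 2 + x y + cc = 0`. -/
structure IsModel (R : Type*) [CommRing R] [Algebra (ZMod 2)[X] R] (y : R) : Prop where
  rel : y ^ 2 + algebraMap (ZMod 2)[X] R X * y + algebraMap (ZMod 2)[X] R cc = 0
  span : ∀ r : R, ∃ a b : (ZMod 2)[X], r = algebraMap (ZMod 2)[X] R a + algebraMap (ZMod 2)[X] R b * y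
  indep : ∀ a b : (ZMod 2)[X], algebraMap (ZMod 2)[X] R a + algebraMap (ZMod 2)[X] R b * y = 0 → a = 0 ∧ b = 0

/-! ### Ideals of the coordinate ring -/

section
variable {R : Type*} [CommRing R] [Algebra (ZMod 2)[X] R]

local notation "φ" => algebraMap (ZMod 2)[X] R

/-- The conjugate of `a + b y` is `a - b x - b y`, since `y` has trace `-x`. -/
theorem nm_mul_conj {y : R} (h : IsModel R y) (a b : (ZMod 2)[X]) :
    (φ a + φ b * y) * (φ a - φ b * φ X - φ b * y) = φ (nm a b) := by
  simp only [nm, map_add, map_sub, map_mul, map_pow]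
  linear_combination (-φ b ^ 2) * h.rel

theorem eq_zero_of_algebraMap {y : R} (h : IsModel R y) {a : (ZMod 2)[X]} (ha : φ a = 0) : a = 0 :=
  (h.indep a 0 (by simp [ha])).1

theorem coords_ext {y : R} (h : IsModel R y) {a b c d : (ZMod 2)[X]}
    (e : φ a + φ b * y = φ c + φ d * y) : a = c ∧ b = d := by
  have := h.indep (a - c) (b - d) (by simp only [map_sub]; linear_combination e)
  exact ⟨sub_eq_zero.1 this.1, sub_eq_zero.1 this.2⟩

theorem mul_formula {y : R} (h : IsModel R y) (a b c d : (ZMod 2)[X]) :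
    (φ a + φ b * y) * (φ c + φ d * y)
      = φ (a * c - b * d * cc) + φ (a * d + b * c - b * d * X) * y := by
  simp only [map_add, map_sub, map_mul]
  linear_combination (φ b * φ d) * h.rel

/-- A generator `a + b y` of `(x, y)` would have norm dividing both `x ^ 2` and `cc`, hence dividing
`x`. By degrees `b = 0`, so the norm is a square and the generator a constant, whereas the constant
terms of the elements of `(x, y)` are divisible by `x`. -/
theorem not_principal {y : R} (h : IsModel R y) : ¬ (Ideal.span {φ X, y}).IsPrincipal := by
  rintro ⟨g, hg⟩
  have hX : φ X ∈ Ideal.span {φ X, y} := Ideal.subset_span (by simp)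
  have hy : y ∈ Ideal.span {φ X, y} := Ideal.subset_span (by simp)
  have hgm : g ∈ Ideal.span {φ X, y} := by rw [hg]; exact Ideal.mem_span_singleton_self _
  rw [hg] at hX hy
  obtain ⟨p, hp⟩ := Ideal.mem_span_singleton.1 hX
  obtain ⟨q, hq⟩ := Ideal.mem_span_singleton.1 hy
  obtain ⟨a, b, rfl⟩ := h.span g
  obtain ⟨c, d, rfl⟩ := h.span p
  obtain ⟨e, f, rfl⟩ := h.span q
  rw [mul_formula h] at hp hq
  obtain ⟨h1, h2⟩ := coords_ext h (show φ X + φ 0 * y = _ by rw [← hp, map_zero, zero_mul, add_zero])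
  obtain ⟨h3, h4⟩ := coords_ext h (show φ 0 + φ 1 * y = _ by rw [← hq, map_zero, map_one, zero_add, one_mul])
  have h5 : nm a b ∣ X ^ 2 := ⟨nm c d, by rw [← nm_mul, ← h1, ← h2]; simp [nm]⟩
  have h6 : nm a b ∣ cc := ⟨nm e f, by rw [← nm_mul, ← h3, ← h4]; simp [nm]⟩
  have h7 : nm a b ∣ X := by
    have := dvd_sub h6 (h5.mul_right (X ^ 3 + 1))
    rwa [show cc - X ^ 2 * (X ^ 3 + 1) = X by unfold cc; ring] at this
  have h8 := natDegree_le_of_dvd h7 X_ne_zero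
  rw [natDegree_X] at h8
  have hb : b = 0 := by
    by_contra hb
    have := five_le_natDegree_nm a hb
    omega
  subst hb
  have ha : a.natDegree = 0 := by
    simp only [nm] at h8
    simp at h8
    omega
  obtain ⟨s, t, hst⟩ := Ideal.mem_span_pair.1 hgm
  obtain ⟨s1, s2, rfl⟩ := h.span s
  obtain ⟨t1, t2, rfl⟩ := h.span t
  have h9 : φ (s1 * X - t2 * cc) + φ (s2 * X + t1 - t2 * X) * y = φ a + φ 0 * y := by
    rw [← hst]
    simp only [map_sub, map_add, map_mul]
    linear_combination (-φ t2) * h.rel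
  have h10 := (coords_ext h h9).1
  have h11 : a.eval 0 = 0 := by rw [← h10]; simp [cc]
  rw [eq_C_of_natDegree_eq_zero ha] at h11
  simp only [eval_C] at h11
  rw [eq_C_of_natDegree_eq_zero ha, h11] at h1
  simp at h1

variable [IsDomain R]

theorem nm_ne_zero {y : R} (h : IsModel R y) {a b : (ZMod 2)[X]} (hab : φ a + φ b * y ≠ 0) :
    nm a b ≠ 0 := by
  intro h0
  have h1 := nm_mul_conj h a b
  rw [h0, map_zero] at h1
  have h2 := (mul_eq_zero.1 h1).resolve_left hab
  obtain ⟨h3, h4⟩ := h.indep (a - b * X) (-b) (by simp only [map_sub, map_neg, map_mul]; linear_combination h2)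
  rw [neg_eq_zero] at h4
  subst h4
  apply hab
  simp at h3
  simp [h3]

/-- Every nonzero ideal is `k (a, b + y)` with `a` dividing the norm of `b + y`: `k` generates the
ideal of `y`-coordinates of elements of `I`, and `k a` generates `I ∩ 𝔽₂[x]`. -/
theorem exists_normal_form {y : R} (h : IsModel R y) (I : Ideal R) (hI : I ≠ ⊥) :
    ∃ k a b : (ZMod 2)[X], k ≠ 0 ∧ a ≠ 0 ∧ a ∣ nm b 1 ∧
      I = Ideal.span {φ k} * Ideal.span {φ a, φ b + y} := by
  -- the ideal of `y`-coordinates of elements of `I`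
  let K : Ideal (ZMod 2)[X] :=
    { carrier := {e | ∃ d, φ d + φ e * y ∈ I}
      add_mem' := by
        rintro e e' ⟨d, hd⟩ ⟨d', hd'⟩
        refine ⟨d + d', ?_⟩
        convert I.add_mem hd hd' using 1
        simp only [map_add]; ring
      zero_mem' := ⟨0, by simp⟩
      smul_mem' := by
        rintro c e ⟨d, hd⟩
        refine ⟨c * d, ?_⟩
        convert I.mul_mem_left (φ c) hd using 1
        simp only [smul_eq_mul, map_mul]; ring }
  obtain ⟨k, hk⟩ := IsPrincipalIdealRing.principal K
  obtain ⟨a0, ha0⟩ := IsPrincipalIdealRing.principal (I.comap φ)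
  have memK : ∀ d e, φ d + φ e * y ∈ I → k ∣ e := fun d e hd => by
    have : e ∈ K := ⟨d, hd⟩
    rw [hk] at this
    exact Ideal.mem_span_singleton.1 this
  have memA : ∀ d, φ d ∈ I → a0 ∣ d := fun d hd => by
    have : d ∈ I.comap φ := hd
    rw [ha0] at this
    exact Ideal.mem_span_singleton.1 this
  have ha0I : φ a0 ∈ I := by
    have : a0 ∈ I.comap φ := by rw [ha0]; exact Ideal.mem_span_singleton_self _
    exact this
  obtain ⟨d0, hd0⟩ : ∃ d, φ d + φ k * y ∈ I := by
    have : k ∈ K := by rw [hk]; exact Ideal.mem_span_singleton_self _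
    exact this
  have ha0ne : a0 ≠ 0 := by
    obtain ⟨r, hr, hr0⟩ := Submodule.exists_mem_ne_zero_of_ne_bot hI
    obtain ⟨d, e, rfl⟩ := h.span r
    rintro rfl
    apply nm_ne_zero h hr0
    apply zero_dvd_iff.1
    apply memA
    rw [← nm_mul_conj h]
    exact I.mul_mem_right _ hr
  obtain ⟨a, rfl⟩ := memK 0 a0 (by simpa using I.mul_mem_right y ha0I)
  obtain ⟨b, rfl⟩ : k ∣ d0 := by
    have := memK (-(k * cc)) (d0 - k * X) (by
      convert I.mul_mem_left y hd0 using 1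
      simp only [map_sub, map_neg, map_mul]
      linear_combination (-φ k) * h.rel)
    simpa using dvd_add this (Dvd.intro X rfl : k ∣ k * X)
  have hk0 : k ≠ 0 := left_ne_zero_of_mul ha0ne
  refine ⟨k, a, b, hk0, right_ne_zero_of_mul ha0ne, ?_, ?_⟩
  · have : k * a ∣ k * nm b 1 := by
      apply memA
      convert I.mul_mem_right (φ b - φ X - y) hd0 using 1
      have := nm_mul_conj h b 1
      simp only [map_one, one_mul] at this
      rw [map_mul, ← this, map_mul]; ring
    exact (mul_dvd_mul_iff_left hk0).1 this
  · apply le_antisymm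
    · intro r hr
      obtain ⟨d, e, rfl⟩ := h.span r
      obtain ⟨e, rfl⟩ := memK d e hr
      obtain ⟨m, hm⟩ : k * a ∣ d - k * b * e := by
        apply memA
        convert I.sub_mem hr (I.mul_mem_left (φ e) hd0) using 1
        simp only [map_sub, map_mul]; ring
      rw [Ideal.mem_span_singleton_mul]
      refine ⟨φ m * φ a + φ e * (φ b + y), Ideal.mem_span_pair.2 ⟨_, _, rfl⟩, ?_⟩
      have hm' := congrArg φ hm
      simp only [map_sub, map_mul] at hm' ⊢
      linear_combination -hm'
    · rw [Ideal.span_singleton_mul_le_iff]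
      intro z hz
      obtain ⟨p, q, rfl⟩ := Ideal.mem_span_pair.1 hz
      convert I.add_mem (I.mul_mem_left p ha0I) (I.mul_mem_left q hd0) using 1
      simp only [map_mul]; ring

/-- Gauss reduction. If `b` is reduced modulo `a` and the norm of `b + y` is `a a'`, then multiplying
`(a, b + y)` by the conjugate of `b + y` gives `a (a', x - b + y)`, and `deg a' < deg a` as soon as
`deg a ≥ 3`. -/
theorem inTrivialOrClassOf_of_dvd {y : R} (h : IsModel R y) (n : ℕ) : ∀ a b : (ZMod 2)[X], a ≠ 0 →
    a.natDegree = n → a ∣ nm b 1 → InTrivialOrClassOf (Ideal.span {φ X, y}) (Ideal.span {φ a, φ b + y}) := by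
  induction n using Nat.strong_induction_on with
  | _ n ih =>
  intro a b ha hn hd
  wlog hlt : b.degree < a.degree generalizing b
  · have hb : b = b % a + a * (b / a) := (EuclideanDomain.mod_add_div b a).symm
    rw [hb, map_add, map_mul, span_pair_congr]
    refine this _ ?_ (degree_mod_lt _ ha)
    rw [hb] at hd
    have : nm (b % a + a * (b / a)) 1 = nm (b % a) 1 + a * ((b / a) * (2 * (b % a) + a * (b / a) - X)) := by
      simp only [nm]; ring
    rw [this] at hd
    exact (dvd_add_left (dvd_mul_right _ _)).1 hd
  rcases Nat.lt_or_ge 2 n with hn2 | hn2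
  · obtain ⟨a', ha'⟩ := hd
    have hN : nm b 1 ≠ 0 := nm_ne_zero h (fun h0 => one_ne_zero (h.indep _ _ h0).2)
    have ha'0 : a' ≠ 0 := by rintro rfl; simp [ha'] at hN
    have hbn : b.natDegree < a.natDegree := by
      rcases eq_or_ne b 0 with rfl | hb0
      · rw [natDegree_zero]; omega
      · exact natDegree_lt_natDegree hb0 hlt
    have hdeg : (nm b 1).natDegree < 2 * n := by
      have h1 : (b ^ 2).natDegree = 2 * b.natDegree := natDegree_pow _ _
      have h3 : (b * 1 * X).natDegree ≤ b.natDegree + 1 := by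
        rw [mul_one]; exact natDegree_mul_le.trans (by simp)
      have h4 : ((1 : (ZMod 2)[X]) ^ 2 * cc).natDegree = 5 := by rw [one_pow, one_mul, cc_natDegree]
      have h5 := natDegree_sub_le (b ^ 2) (b * 1 * X)
      have h6 := natDegree_add_le (b ^ 2 - b * 1 * X) (1 ^ 2 * cc)
      unfold nm
      omega
    rw [ha', natDegree_mul ha ha'0] at hdeg
    have hconj := nm_mul_conj h b 1
    rw [ha', map_mul, map_one, one_mul, one_mul] at hconj
    have hs : φ b - φ X - y ≠ 0 := fun h0 => by
      refine one_ne_zero (neg_eq_zero.1 (h.indep (b - X) (-1) ?_).2)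
      rw [map_sub, map_neg, map_one]
      linear_combination h0
    refine InTrivialOrClassOf.trans (s := φ b - φ X - y) (t := φ a) (J := Ideal.span {φ a', φ (X - b) + y})
      hs (fun h0 => ha (eq_zero_of_algebraMap h h0)) ?_ (ih a'.natDegree (by omega) a' (X - b) ha'0 rfl ?_)
    · rw [singleton_mul_pair, singleton_mul_pair,
        Ideal.span_pair_comm, ← Ideal.span_pair_neg]
      congr 2
      · linear_combination hconj
      · rw [map_sub]
        congr 1
        ring
    · refine ⟨a, ?_⟩
      rw [mul_comm, ← ha']; simp only [nm]; ring
  · rcases eq_one_or_of_natDegree_le_two ha (hn ▸ hn2) hlt hd with rfl | ⟨rfl, rfl⟩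
    · refine ⟨1, 1, one_ne_zero, one_ne_zero, Or.inl ?_⟩
      rw [map_one, Ideal.span_singleton_one, Ideal.top_mul, Ideal.eq_top_iff_one]
      exact Ideal.subset_span (by simp)
    · exact ⟨1, 1, one_ne_zero, one_ne_zero, Or.inr (by simp)⟩

end

theorem card_eq_two {R : Type*} [CommRing R] [IsDedekindDomain R] [Algebra (ZMod 2)[X] R]
    {y : R} (h : IsModel R y) :
    Nat.card (ClassGroup R) = 2 := by
  have hQ : Ideal.span {algebraMap (ZMod 2)[X] R X, y} ≠ ⊥ := fun h0 => X_ne_zero (eq_zero_of_algebraMap h (by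
    have : algebraMap (ZMod 2)[X] R X ∈ Ideal.span {algebraMap (ZMod 2)[X] R X, y} := Ideal.subset_span (by simp)
    rw [h0] at this; exact this))
  rw [Nat.card_eq_two_iff]
  refine ⟨1, ClassGroup.mk0 ⟨_, mem_nonZeroDivisors_iff_ne_zero.2 hQ⟩, ?_, ?_⟩
  · rw [ne_comm, Ne, ClassGroup.mk0_eq_one_iff]
    exact not_principal h
  · rw [Set.eq_univ_iff_forall]
    intro z
    obtain ⟨⟨I, hI⟩, rfl⟩ := ClassGroup.mk0_surjective z
    obtain ⟨k, a, b, hk, ha, hd, rfl⟩ := exists_normal_form h I (mem_nonZeroDivisors_iff_ne_zero.1 hI)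
    obtain ⟨u, v, hu, hv, h1 | h1⟩ : InTrivialOrClassOf (Ideal.span {algebraMap (ZMod 2)[X] R X, y}) _ :=
      InTrivialOrClassOf.trans (s := 1) (t := algebraMap (ZMod 2)[X] R k)
        (I := Ideal.span {algebraMap (ZMod 2)[X] R k} *
          Ideal.span {algebraMap (ZMod 2)[X] R a, algebraMap (ZMod 2)[X] R b + y})
        (J := Ideal.span {algebraMap (ZMod 2)[X] R a, algebraMap (ZMod 2)[X] R b + y}) one_ne_zero
        (fun h0 => hk (eq_zero_of_algebraMap h h0)) (by simp) (inTrivialOrClassOf_of_dvd h _ a b ha rfl hd)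
    · left
      rw [← map_one ClassGroup.mk0, ClassGroup.mk0_eq_mk0_iff]
      exact ⟨u, v, hu, hv, by simpa using h1⟩
    · right
      rw [Set.mem_singleton_iff, ClassGroup.mk0_eq_mk0_iff]
      exact ⟨u, v, hu, hv, h1⟩

/-! ### The integral closure -/

section
variable {f : (RatFunc (ZMod 2))[X]}

theorem exists_rep (hf : f.Monic) (hd : f.natDegree = 2) (z : AdjoinRoot f) :
    ∃ u v, z = AdjoinRoot.of f u + AdjoinRoot.of f v * AdjoinRoot.root f := by
  obtain ⟨p, rfl⟩ := AdjoinRoot.mk_surjective z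
  have h1 : (p %ₘ f).natDegree ≤ 1 := by
    have := natDegree_modByMonic_lt p hf (by rintro rfl; simp at hd)
    omega
  obtain ⟨v, u, h2⟩ := exists_eq_X_add_C_of_natDegree_le_one h1
  refine ⟨u, v, ?_⟩
  rw [← modByMonic_add_div p f, h2]
  simp only [map_add, map_mul, AdjoinRoot.mk_self, zero_mul, AdjoinRoot.mk_C, AdjoinRoot.mk_X]
  ring

theorem rep_indep (hd : f.natDegree = 2) {u v : RatFunc (ZMod 2)}
    (h : AdjoinRoot.of f u + AdjoinRoot.of f v * AdjoinRoot.root f = 0) : u = 0 ∧ v = 0 := by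
  have h1 : f ∣ C v * X + C u := by
    rw [← AdjoinRoot.mk_eq_zero, ← h]
    simp only [map_add, map_mul, AdjoinRoot.mk_C, AdjoinRoot.mk_X]
    ring
  have h2 : C v * X + C u = 0 := by
    by_contra h0
    have h3 := natDegree_le_of_dvd h1 h0
    have h4 : (C v * X + C u).natDegree ≤ 1 := natDegree_linear_le
    omega
  have h5 := congrArg (coeff · 0) h2
  have h6 := congrArg (coeff · 1) h2
  simp at h5 h6
  exact ⟨h5, h6⟩

/-- If `u + v y` has integral trace and norm, then `u` and `v` are polynomials. This uses that `cc` is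
divisible by `x` exactly once, so that the curve is smooth above `x = 0`. -/
theorem coeff_integral {u v : RatFunc (ZMod 2)}
    (htr : IsIntegral (ZMod 2)[X] (2 * u - v * RatFunc.X))
    (hnm : IsIntegral (ZMod 2)[X]
      (u ^ 2 - u * v * RatFunc.X + v ^ 2 * (algebraMap (ZMod 2)[X] _ cc))) :
    ∃ a b : (ZMod 2)[X], algebraMap _ _ a = u ∧ algebraMap _ _ b = v := by
  have hinj : Function.Injective (algebraMap (ZMod 2)[X] (RatFunc (ZMod 2))) :=
    IsFractionRing.injective _ _
  have h2 : (2 : RatFunc (ZMod 2)) = 0 := by exact_mod_cast CharP.cast_eq_zero (RatFunc (ZMod 2)) 2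
  obtain ⟨w, hw⟩ := IsIntegrallyClosed.isIntegral_iff.1 htr
  rw [h2, zero_mul, zero_sub] at hw
  obtain ⟨n, hn⟩ := IsIntegrallyClosed.isIntegral_iff.1 hnm
  rw [← RatFunc.algebraMap_X] at hw hn
  have hX : algebraMap (ZMod 2)[X] (RatFunc (ZMod 2)) X ≠ 0 := by
    rw [RatFunc.algebraMap_X]; exact RatFunc.X_ne_zero
  -- `X * u` is integral, being a root of `T ^ 2 + w X T + w ^ 2 cc - X ^ 2 n`
  obtain ⟨t, ht⟩ : ∃ t, algebraMap (ZMod 2)[X] (RatFunc (ZMod 2)) t =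
      algebraMap (ZMod 2)[X] _ X * u := by
    apply IsIntegrallyClosed.isIntegral_iff.1
    refine ⟨X ^ 2 + C (w * X) * X + C (w ^ 2 * cc - X ^ 2 * n), ?_, ?_⟩
    · monicity!
    · simp only [eval₂_add, eval₂_mul, eval₂_pow, eval₂_X, eval₂_C]
      simp only [map_sub, map_mul, map_pow, hw, hn]
      ring
  have hrel : t ^ 2 + w * X * t + w ^ 2 * cc = X ^ 2 * n := by
    apply hinj
    simp only [map_add, map_mul, map_pow, hw, hn, ht]
    ring
  obtain ⟨t, rfl⟩ : X ∣ t := by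
    apply prime_X.dvd_of_dvd_pow (n := 2)
    refine ⟨X * n - w * t - w ^ 2 * (X ^ 4 + X + 1), ?_⟩
    unfold cc at hrel
    linear_combination hrel
  obtain ⟨w, rfl⟩ : X ∣ w := by
    apply prime_X.dvd_of_dvd_pow (n := 2)
    refine ⟨n - t ^ 2 - w * t - w ^ 2 * (X ^ 3 + 1), mul_left_cancel₀ X_ne_zero ?_⟩
    unfold cc at hrel
    linear_combination hrel
  refine ⟨t, -w, mul_left_cancel₀ hX ?_, mul_left_cancel₀ hX ?_⟩
  · rw [← ht, map_mul]
  · rw [map_mul] at hw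
    rw [map_neg]
    linear_combination -hw

theorem isModel_root [Fact (Irreducible f)]
    (hf : f = X ^ 2 + C RatFunc.X * X + C (RatFunc.X * (RatFunc.X ^ 4 + RatFunc.X + 1))) :
    ∃ y : FunctionField.ringOfIntegers (ZMod 2) (AdjoinRoot f), IsModel _ y := by
  have hmon : f.Monic := by rw [hf]; monicity!
  have hdeg : f.natDegree = 2 := by rw [hf]; compute_degree!
  have hcc : algebraMap (ZMod 2)[X] (RatFunc (ZMod 2)) cc
      = RatFunc.X * (RatFunc.X ^ 4 + RatFunc.X + 1) := by
    simp [cc, RatFunc.algebraMap_X]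
  have hφ : ∀ a : (ZMod 2)[X], algebraMap (ZMod 2)[X] (AdjoinRoot f) a
      = AdjoinRoot.of f (algebraMap _ _ a) := fun a =>
    IsScalarTower.algebraMap_apply (ZMod 2)[X] (RatFunc (ZMod 2)) (AdjoinRoot f) a
  have hφX : algebraMap (ZMod 2)[X] (AdjoinRoot f) X = AdjoinRoot.of f RatFunc.X := by
    rw [hφ, RatFunc.algebraMap_X]
  have hrel : AdjoinRoot.root f ^ 2 + AdjoinRoot.of f RatFunc.X * AdjoinRoot.root f
      + AdjoinRoot.of f (algebraMap _ _ cc) = 0 := by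
    have h := AdjoinRoot.eval₂_root f
    conv at h => lhs; arg 3; rw [hf]
    rw [hcc]
    simpa only [eval₂_add, eval₂_mul, eval₂_pow, eval₂_X, eval₂_C] using h
  have hint : IsIntegral (ZMod 2)[X] (AdjoinRoot.root f) := by
    refine ⟨X ^ 2 + C X * X + C cc, by monicity!, ?_⟩
    simpa only [eval₂_add, eval₂_mul, eval₂_pow, eval₂_X, eval₂_C, hφX, hφ cc] using hrel
  -- the conjugation of the quadratic extension
  let σ : AdjoinRoot f →ₐ[RatFunc (ZMod 2)] AdjoinRoot f :=
    AdjoinRoot.liftAlgHom f (Algebra.ofId _ _) (-AdjoinRoot.of f RatFunc.X - AdjoinRoot.root f) (by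
      conv_lhs => arg 3; rw [hf]
      rw [hcc] at hrel
      simp only [eval₂_add, eval₂_mul, eval₂_pow, eval₂_X, eval₂_C]
      change _ ^ 2 + AdjoinRoot.of f _ * _ + AdjoinRoot.of f _ = 0
      linear_combination hrel)
  have hσ : ∀ u v, σ (AdjoinRoot.of f u + AdjoinRoot.of f v * AdjoinRoot.root f)
      = AdjoinRoot.of f u + AdjoinRoot.of f v * (-AdjoinRoot.of f RatFunc.X - AdjoinRoot.root f) := by
    intro u v
    rw [map_add, map_mul]
    have h1 : ∀ u, σ (AdjoinRoot.of f u) = AdjoinRoot.of f u := fun u => σ.commutes u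
    rw [h1, h1, AdjoinRoot.liftAlgHom_root]
  have hinj : Function.Injective (algebraMap (RatFunc (ZMod 2)) (AdjoinRoot f)) :=
    (AdjoinRoot.of f).injective
  refine ⟨⟨AdjoinRoot.root f, hint⟩, ?_, ?_, ?_⟩
  · apply Subtype.ext
    change _ ^ 2 + algebraMap (ZMod 2)[X] (AdjoinRoot f) X * _
      + algebraMap (ZMod 2)[X] (AdjoinRoot f) cc = 0
    rw [hφX, hφ, hrel]
  · rintro ⟨z, hz⟩
    obtain ⟨u, v, rfl⟩ := exists_rep hmon hdeg z
    have hz : IsIntegral (ZMod 2)[X] _ := hz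
    have hz' := hz.map (σ.restrictScalars (ZMod 2)[X])
    rw [AlgHom.restrictScalars_apply, hσ] at hz'
    have htr : AdjoinRoot.of f u + AdjoinRoot.of f v * AdjoinRoot.root f
        + (AdjoinRoot.of f u
          + AdjoinRoot.of f v * (-AdjoinRoot.of f RatFunc.X - AdjoinRoot.root f))
        = algebraMap (RatFunc (ZMod 2)) (AdjoinRoot f) (2 * u - v * RatFunc.X) := by
      change _ = AdjoinRoot.of f _
      simp only [map_sub, map_mul, map_ofNat]
      ring
    have hnm : (AdjoinRoot.of f u + AdjoinRoot.of f v * AdjoinRoot.root f)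
        * (AdjoinRoot.of f u
          + AdjoinRoot.of f v * (-AdjoinRoot.of f RatFunc.X - AdjoinRoot.root f))
        = algebraMap (RatFunc (ZMod 2)) (AdjoinRoot f)
          (u ^ 2 - u * v * RatFunc.X + v ^ 2 * algebraMap (ZMod 2)[X] _ cc) := by
      change _ = AdjoinRoot.of f _
      simp only [map_sub, map_mul, map_add, map_pow]
      linear_combination (-(AdjoinRoot.of f v) ^ 2) * hrel
    obtain ⟨a, b, rfl, rfl⟩ := coeff_integral
      ((isIntegral_algebraMap_iff hinj).1 (htr ▸ hz.add hz'))
      ((isIntegral_algebraMap_iff hinj).1 (hnm ▸ hz.mul hz'))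
    refine ⟨a, b, Subtype.ext ?_⟩
    change _ = algebraMap (ZMod 2)[X] (AdjoinRoot f) a
      + algebraMap (ZMod 2)[X] (AdjoinRoot f) b * AdjoinRoot.root f
    rw [hφ, hφ]
  · intro a b hab
    have h1 : algebraMap (ZMod 2)[X] (AdjoinRoot f) a
      + algebraMap (ZMod 2)[X] (AdjoinRoot f) b * AdjoinRoot.root f = 0 := congrArg Subtype.val hab
    rw [hφ, hφ] at h1
    obtain ⟨h2, h3⟩ := rep_indep hdeg h1
    exact ⟨by simpa using h2, by simpa using h3⟩

/-- The ring is finite over `𝔽₂[x]` by its basis `1, y`, which gives noetherianity. -/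
theorem isDedekindDomain_of_isModel [Fact (Irreducible f)] (hf : f.Monic)
    {y : FunctionField.ringOfIntegers (ZMod 2) (AdjoinRoot f)} (h : IsModel _ y) :
    IsDedekindDomain (FunctionField.ringOfIntegers (ZMod 2) (AdjoinRoot f)) := by
  have : FunctionField (ZMod 2) (AdjoinRoot f) := hf.finite_adjoinRoot
  have : Module.Finite (ZMod 2)[X] (FunctionField.ringOfIntegers (ZMod 2) (AdjoinRoot f)) := by
    refine ⟨⟨{1, y}, ?_⟩⟩
    rw [eq_top_iff]
    rintro r -
    obtain ⟨a, b, rfl⟩ := h.span r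
    rw [Finset.coe_pair, Submodule.mem_span_pair]
    exact ⟨a, b, by simp only [Algebra.smul_def, mul_one]⟩
  have : IsNoetherianRing (FunctionField.ringOfIntegers (ZMod 2) (AdjoinRoot f)) :=
    IsNoetherianRing.of_finite (ZMod 2)[X] _
  have : Ring.DimensionLEOne (FunctionField.ringOfIntegers (ZMod 2) (AdjoinRoot f)) :=
    Ring.DimensionLEOne.of_isIntegral (ZMod 2)[X] _
  exact {}
end

theorem class_group_statement_4
    (f : Polynomial (RatFunc (ZMod 2)))
    (hf : f = X ^ 2 + C RatFunc.X * X + C (RatFunc.X * (RatFunc.X ^ 4 + RatFunc.X + 1)))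
    [Fact (Irreducible f)] :
    IsCyclic (ClassGroup (FunctionField.ringOfIntegers (ZMod 2) (AdjoinRoot f))) ∧
      Nat.card (ClassGroup (FunctionField.ringOfIntegers (ZMod 2) (AdjoinRoot f))) = 2 := by
  obtain ⟨y, hy⟩ := isModel_root hf
  have := isDedekindDomain_of_isModel (by rw [hf]; monicity!) hy
  have hcard := card_eq_two hy
  have : Fact (Nat.Prime 2) := ⟨Nat.prime_two⟩
  exact ⟨isCyclic_of_prime_card hcard, hcard⟩
end

section
/- Let K = F_2(x)(y) where y satisfies y^2 + (x^2 + x + 1)·y + (x^2 + x + 1)(x^5 + x^2 + 1) = 0 (this quadratic polynomial in y is irreducible over F_2(x)). Then the ideal class group Cl(O_K), where O_K is the integral closure of F_2[x] in K, is cyclic of order 2. -/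
/-!
Write `h = x² + x + 1` and `g = x⁵ + x² + 1`, so that `y² + h y + h g = 0`.

The ring of integers is `R = F₂[x] ⊕ F₂[x] y` (`isQuadOrder_ringOfIntegers`): if `a + b y` is
integral, its trace `b h` and its norm `a² + a b h + b² h g` are polynomials, and as `h` is prime
and does not divide `g`, this forces `a` and `b` to be polynomials (`isIntegral_coords`).

Every nonzero ideal of `R` has the form `c (u, y + v)` with `u ∣ N(y + v) = v² + v h + h g`
(`IsQuadOrder.exists_form`). If `N(y + v) = u u'`, multiplication by `y + v + h` shows that
`(u, y + v)` and `(u', y + v + h)` lie in the same class (`IsQuadOrder.sim_step`). After reducing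
`v` modulo `u`, this lowers the degree of `u` as soon as `deg u ≥ 4`, since
`deg N(y + v) ≤ max (2 deg u - 2, deg u + 1, 7) < 2 deg u`. This is Cantor's reduction; it ends
with `deg u ≤ 3`, where a finite check (`small_u`) leaves only the unit ideal and `P = (h, y)`.

Finally `P` is not principal (`IsQuadOrder.not_principal`): a generator would divide `h`, but the
norm of `a + b y` has degree at least `7` when `b ≠ 0` (`norm_natDegree`), so the generator would
be a polynomial; dividing `y`, it would be a unit, while `P` is a proper ideal.
-/

/-! ### The polynomials `h`, `g` and the norm form -/

open Polynomial

/-- The linear coefficient `h = x² + x + 1` of the equation of `y`. -/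
noncomputable def hh : (ZMod 2)[X] := X ^ 2 + X + 1

/-- The cofactor `g = x⁵ + x² + 1`: the norm of `y` is `h g`. -/
noncomputable def gg : (ZMod 2)[X] := X ^ 5 + X ^ 2 + 1

lemma two_eq_zero_poly : (2 : (ZMod 2)[X]) = 0 := CharTwo.two_eq_zero

lemma natDegree_hh : hh.natDegree = 2 := by unfold hh; compute_degree!
lemma natDegree_gg : gg.natDegree = 5 := by unfold gg; compute_degree!
lemma hh_ne_zero : hh ≠ 0 := fun h => by have := natDegree_hh; simp [h] at this
lemma gg_ne_zero : gg ≠ 0 := fun h => by have := natDegree_gg; simp [h] at this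

lemma hh_prime : Prime hh := by
  apply Irreducible.prime
  rw [Polynomial.irreducible_iff_roots_eq_zero_of_degree_le_three (by rw [natDegree_hh])
    (by rw [natDegree_hh]; norm_num)]
  rw [Multiset.eq_zero_iff_forall_notMem]
  intro a ha
  have h := (mem_roots'.1 ha).2
  simp only [IsRoot, hh, eval_add, eval_pow, eval_X, eval_one] at h
  clear ha; revert h; revert a; decide

/-- The norm of `a + b y` with `b ≠ 0` has degree at least `7`: the terms `a²` and `b² h g` have
degrees of different parity, and the larger of them exceeds the degree of `a b h`. -/
lemma norm_natDegree (a b : (ZMod 2)[X]) (hb : b ≠ 0) :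
    7 ≤ (a ^ 2 + a * b * hh + b ^ 2 * (hh * gg)).natDegree := by
  have h3 : (b ^ 2 * (hh * gg)).natDegree = 2 * b.natDegree + 7 := by
    rw [natDegree_mul (pow_ne_zero 2 hb) (mul_ne_zero hh_ne_zero gg_ne_zero),
      natDegree_mul hh_ne_zero gg_ne_zero, natDegree_pow, natDegree_hh, natDegree_gg]
  by_cases ha : a = 0
  · subst ha
    rw [show (0 : (ZMod 2)[X]) ^ 2 + 0 * b * hh + b ^ 2 * (hh * gg) = b ^ 2 * (hh * gg) by ring, h3]
    omega
  have h1 : (a ^ 2).natDegree = 2 * a.natDegree := natDegree_pow _ _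
  have h2 : (a * b * hh).natDegree = a.natDegree + b.natDegree + 2 := by
    rw [natDegree_mul (mul_ne_zero ha hb) hh_ne_zero, natDegree_mul ha hb, natDegree_hh]
  rcases le_or_gt (b.natDegree + 4) a.natDegree with h | h
  · have h4 : (a * b * hh + b ^ 2 * (hh * gg)).natDegree < (a ^ 2).natDegree :=
      (natDegree_add_le _ _).trans_lt (max_lt (by omega) (by omega))
    rw [add_assoc, natDegree_add_eq_left_of_natDegree_lt h4]
    omega
  · have h4 : (a ^ 2 + a * b * hh).natDegree < (b ^ 2 * (hh * gg)).natDegree :=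
      (natDegree_add_le _ _).trans_lt (max_lt (by omega) (by omega))
    rw [natDegree_add_eq_right_of_natDegree_lt h4]
    omega

lemma eq_cubic (p : (ZMod 2)[X]) (hp : p.natDegree ≤ 3) :
    p = C (p.coeff 3) * X ^ 3 + C (p.coeff 2) * X ^ 2 + C (p.coeff 1) * X + C (p.coeff 0) := by
  conv_lhs => rw [p.as_sum_range_C_mul_X_pow' (show p.natDegree < 4 by omega)]
  simp [Finset.sum_range_succ]
  ring

/-! ### Cantor-reduced pairs of degree at most three -/

/-- The matrices are the companion matrices of `x³ + x + 1` and `x³ + x² + 1`, standing for a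
generator of the field with eight elements. Over that field, `v² + v h + h g` has no root `v`. -/
lemma matrix_ne (M : Matrix (Fin 3) (Fin 3) (ZMod 2))
    (hM : M = !![0,0,1;1,0,1;0,1,0] ∨ M = !![0,0,1;1,0,0;0,1,1]) (p q r : ZMod 2) :
    (p • M ^ 2 + q • M + r • 1) ^ 2 + (p • M ^ 2 + q • M + r • 1) * (M ^ 2 + M + 1) +
      (M ^ 2 + M + 1) * (M ^ 5 + M ^ 2 + 1) ≠ 0 := by
  rcases hM with rfl | rfl <;> revert p q r <;> decide +kernel

/-- The only reduced pairs `(u, v)` with `deg u ≤ 3` are `(1, 0)` and `(h, 0)`. The points `0` and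
`1` are inert, so `u` has no root, which leaves `1`, `h` and the two irreducible cubics; the cubics
are inert as well. -/
lemma small_u (u v : (ZMod 2)[X]) (hu : u ≠ 0) (hd : u.natDegree ≤ 3) (hv : v.degree < u.degree)
    (hdvd : u ∣ v ^ 2 + v * hh + hh * gg) : u = 1 ∨ (u = hh ∧ v = 0) := by
  obtain ⟨w, hw⟩ := hdvd
  have e0 : u.eval 0 ≠ 0 := by
    intro h
    have := congrArg (eval 0) hw
    simp only [hh, gg, eval_add, eval_mul, eval_pow, eval_X, eval_one, h] at this
    generalize eval 0 v = t at this
    clear h; revert t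
    simp only [zero_mul]; decide
  have e1 : u.eval 1 ≠ 0 := by
    intro h
    have := congrArg (eval 1) hw
    simp only [hh, gg, eval_add, eval_mul, eval_pow, eval_X, eval_one, h] at this
    generalize eval 1 v = t at this
    clear h; revert t
    simp only [zero_mul]; decide
  have hu3 := eq_cubic u hd
  have hvd : v.natDegree ≤ 3 := (natDegree_le_natDegree hv.le).trans hd
  have hv3 := eq_cubic v hvd
  have key : ∀ a b c d : ZMod 2, d ≠ 0 → a + b + c + d ≠ 0 →
      (a = 0 ∧ b = 0 ∧ c = 0 ∧ d = 1) ∨ (a = 0 ∧ b = 1 ∧ c = 1 ∧ d = 1) ∨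
      (a = 1 ∧ b = 0 ∧ c = 1 ∧ d = 1) ∨ (a = 1 ∧ b = 1 ∧ c = 0 ∧ d = 1) := by decide
  rw [hu3] at e0 e1
  simp only [eval_add, eval_mul, eval_pow, eval_X, eval_C, one_pow, mul_one, mul_zero, zero_add,
    ne_eq, OfNat.ofNat_ne_zero, not_false_eq_true, zero_pow] at e0 e1
  have cubic : u.coeff 3 = 1 → ∀ M : Matrix (Fin 3) (Fin 3) (ZMod 2),
      (M = !![0,0,1;1,0,1;0,1,0] ∨ M = !![0,0,1;1,0,0;0,1,1]) → aeval M u = 0 → False := by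
    intro hc M hM h0
    have hv2 : v.coeff 3 = 0 := by
      apply coeff_eq_zero_of_degree_lt
      refine hv.trans_le ?_
      rw [degree_eq_natDegree hu]
      exact_mod_cast hd
    have := congrArg (aeval M) hw
    rw [map_mul, h0, zero_mul, hv3, hv2] at this
    refine matrix_ne M hM (v.coeff 2) (v.coeff 1) (v.coeff 0) ?_
    rw [← this]
    simp [hh, gg, Algebra.algebraMap_eq_smul_one]
  rcases key _ _ _ _ e0 e1 with ⟨h3, h2, h1, h0⟩ | ⟨h3, h2, h1, h0⟩ | ⟨h3, h2, h1, h0⟩ |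
    ⟨h3, h2, h1, h0⟩ <;> rw [h3, h2, h1, h0] at hu3
  · left; rw [hu3]; simp
  · right
    have hu' : u = hh := by rw [hu3]; simp [hh]
    refine ⟨hu', ?_⟩
    subst hu'
    have h1 : hh ∣ v ^ 2 := ⟨w + v + gg, by linear_combination hw - (v * hh + hh * gg) * two_eq_zero_poly⟩
    exact eq_zero_of_dvd_of_degree_lt (hh_prime.dvd_of_dvd_pow h1) hv
  · refine (cubic h3 _ (Or.inl rfl) ?_).elim
    rw [hu3]; simp; decide +kernel
  · refine (cubic h3 _ (Or.inr rfl) ?_).elim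
    rw [hu3]; simp; decide +kernel

/-! ### Ideal classes of the order `F₂[x] ⊕ F₂[x] y` -/

/-- `R` is the free `F₂[x]`-module on `1` and `y`, where `y² + h y + h g = 0`. -/
structure IsQuadOrder {R : Type*} [CommRing R] [Algebra (ZMod 2)[X] R] (y : R) : Prop where
  rel : y ^ 2 + algebraMap (ZMod 2)[X] R hh * y + algebraMap (ZMod 2)[X] R (hh * gg) = 0
  rep : ∀ r : R, ∃ a b : (ZMod 2)[X], r = algebraMap _ R a + algebraMap _ R b * y
  indep : ∀ a b : (ZMod 2)[X], algebraMap _ R a + algebraMap _ R b * y = 0 → a = 0 ∧ b = 0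

namespace IsQuadOrder

variable {R : Type*} [CommRing R] [Algebra (ZMod 2)[X] R] {y : R}

local notation "φ" => algebraMap (ZMod 2)[X] R

lemma two_eq_zero (_ : IsQuadOrder y) : (2 : R) = 0 := by
  have := congrArg φ two_eq_zero_poly
  rwa [map_ofNat, map_zero] at this

lemma inj (hy : IsQuadOrder y) {a : (ZMod 2)[X]} (h : φ a = 0) : a = 0 :=
  (hy.indep a 0 (by simp [h])).1

lemma coord_ext (hy : IsQuadOrder y) {a b c d : (ZMod 2)[X]} (h : φ a + φ b * y = φ c + φ d * y) :
    a = c ∧ b = d := by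
  have := hy.indep (a - c) (b - d) (by rw [map_sub, map_sub]; linear_combination h)
  exact ⟨sub_eq_zero.1 this.1, sub_eq_zero.1 this.2⟩

/-- The conjugate of `y` is `y + h`. -/
lemma norm_mul (hy : IsQuadOrder y) (a b : (ZMod 2)[X]) :
    (φ a + φ b * y) * (φ a + φ b * (y + φ hh)) = φ (a ^ 2 + a * b * hh + b ^ 2 * (hh * gg)) := by
  have := hy.rel
  simp only [map_add, map_mul, map_pow] at this ⊢
  linear_combination (φ b) ^ 2 * this + (φ a * φ b * y - φ b ^ 2 * φ hh * φ gg) * hy.two_eq_zero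

lemma norm_one_mul (hy : IsQuadOrder y) (v : (ZMod 2)[X]) :
    (y + φ v) * (y + φ (v + hh)) = φ (v ^ 2 + v * hh + hh * gg) := by
  have := hy.norm_mul v 1
  simp only [map_add, map_mul, map_pow, map_one] at this ⊢
  linear_combination this

lemma norm_ne_zero (v : (ZMod 2)[X]) : v ^ 2 + v * hh + hh * gg ≠ 0 := by
  intro h
  have := norm_natDegree v 1 one_ne_zero
  rw [show v ^ 2 + v * 1 * hh + 1 ^ 2 * (hh * gg) = v ^ 2 + v * hh + hh * gg by ring, h] at this
  simp at this

/-- Every nonzero ideal is `c (u, y + v)` with `u ∣ N(y + v)`. Here `c` generates the ideal of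
`y`-coordinates of elements of `I`, and `c u` generates `I ∩ F₂[x]`. -/
lemma exists_form (hy : IsQuadOrder y) (I : Ideal R) (hI : I ≠ ⊥) :
    ∃ c u v : (ZMod 2)[X], c ≠ 0 ∧ u ≠ 0 ∧ u ∣ v ^ 2 + v * hh + hh * gg ∧
      I = Ideal.span {φ c} * Ideal.span {φ u, y + φ v} := by
  let B : Ideal (ZMod 2)[X] :=
    { carrier := {b | ∃ a, φ a + φ b * y ∈ I}
      add_mem' := by
        rintro b b' ⟨a, ha⟩ ⟨a', ha'⟩
        refine ⟨a + a', ?_⟩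
        convert I.add_mem ha ha' using 1
        rw [map_add, map_add]; ring
      zero_mem' := ⟨0, by simp⟩
      smul_mem' := by
        rintro c b ⟨a, ha⟩
        refine ⟨c * a, ?_⟩
        convert I.mul_mem_left (φ c) ha using 1
        rw [smul_eq_mul, map_mul, map_mul]; ring }
  let A : Ideal (ZMod 2)[X] := I.comap φ
  obtain ⟨c, hc⟩ := (IsPrincipalIdealRing.principal B).principal
  obtain ⟨w, hw⟩ := (IsPrincipalIdealRing.principal A).principal
  have hcB : ∀ b, b ∈ B ↔ c ∣ b := fun b => by
    rw [hc]; exact Ideal.mem_span_singleton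
  have hwA : ∀ a, φ a ∈ I ↔ w ∣ a := fun a => by
    change a ∈ A ↔ _
    rw [hw]; exact Ideal.mem_span_singleton
  have hrel := hy.rel
  have h2 := hy.two_eq_zero
  -- because `w y ∈ I`
  have hcw : c ∣ w := (hcB w).1 ⟨0, by
    rw [map_zero, zero_add]; exact I.mul_mem_right _ ((hwA w).2 dvd_rfl)⟩
  obtain ⟨v₀, hv₀⟩ := (hcB c).2 dvd_rfl
  have hcv : c ∣ v₀ := by
    have h1 : c ∣ v₀ + c * hh := by
      refine (hcB _).1 ⟨c * (hh * gg), ?_⟩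
      convert I.mul_mem_right y hv₀ using 1
      simp only [map_add, map_mul] at hrel ⊢
      linear_combination -(φ c) * hrel + φ c * (φ hh * φ gg + φ hh * y) * h2
    exact (dvd_add_left (dvd_mul_right _ _)).1 h1
  obtain ⟨u, rfl⟩ := hcw
  obtain ⟨v, rfl⟩ := hcv
  have hmem : φ c * (y + φ v) ∈ I := by
    convert hv₀ using 1
    rw [map_mul]; ring
  have hform : I = Ideal.span {φ c} * Ideal.span {φ u, y + φ v} := by
    rw [Ideal.span_mul_span', Set.singleton_mul, Set.image_pair, ← map_mul]
    apply le_antisymm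
    · intro r hr
      obtain ⟨a, b, rfl⟩ := hy.rep r
      obtain ⟨t, rfl⟩ := (hcB b).1 ⟨a, hr⟩
      have h1 : φ (a - t * (c * v)) ∈ I := by
        convert I.sub_mem hr (I.mul_mem_left (φ t) hmem) using 1
        simp only [map_sub, map_mul]; ring
      obtain ⟨s, hs⟩ := (hwA _).1 h1
      rw [Ideal.mem_span_pair]
      refine ⟨φ s, φ t, ?_⟩
      have := congrArg φ hs
      simp only [map_sub, map_mul] at this ⊢
      linear_combination -this
    · rw [Ideal.span_le]
      rintro r (rfl | rfl)
      · exact (hwA _).2 dvd_rfl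
      · exact hmem
  have hN : c * u ∣ c * (v ^ 2 + v * hh + hh * gg) := by
    rw [← hwA, map_mul, ← hy.norm_one_mul, ← mul_assoc]
    exact I.mul_mem_right _ hmem
  have hc0 : c ≠ 0 := by
    rintro rfl
    apply hI
    rw [hform]; simp
  have hdvd := (mul_dvd_mul_iff_left hc0).1 hN
  refine ⟨c, u, v, hc0, ?_, hdvd, hform⟩
  rintro rfl
  exact norm_ne_zero v (zero_dvd_iff.1 hdvd)

/-- Two ideals differ by nonzero principal factors; for nonzero ideals of a Dedekind domain this
says that their classes agree. -/
def Sim (I J : Ideal R) : Prop :=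
  ∃ α β : R, α ≠ 0 ∧ β ≠ 0 ∧ Ideal.span {α} * I = Ideal.span {β} * J

lemma Sim.trans {S : Type*} [CommRing S] [IsDomain S] {I J K : Ideal S} (h₁ : Sim I J) (h₂ : Sim J K) : Sim I K := by
  obtain ⟨α, β, hα, hβ, h⟩ := h₁
  obtain ⟨γ, δ, hγ, hδ, h'⟩ := h₂
  refine ⟨γ * α, β * δ, mul_ne_zero hγ hα, mul_ne_zero hβ hδ, ?_⟩
  rw [← Ideal.span_singleton_mul_span_singleton, ← Ideal.span_singleton_mul_span_singleton,
    mul_assoc, h, mul_left_comm, h', mul_assoc]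

lemma span_mod (u v : (ZMod 2)[X]) :
    Ideal.span {φ u, y + φ v} = Ideal.span {φ u, y + φ (v % u)} := by
  have h := congrArg φ (EuclideanDomain.div_add_mod v u)
  rw [map_add, map_mul] at h
  rw [← h, ← add_assoc, add_right_comm, Ideal.span_pair_add_left_mul]

/-- One reduction step: `(y + v + h) (u, y + v) = u (u', y + v + h)` when `N(y + v) = u u'`. -/
lemma sim_step [IsDomain R] (hy : IsQuadOrder y) {u u' v : (ZMod 2)[X]} (hu : u ≠ 0)
    (h : v ^ 2 + v * hh + hh * gg = u * u') :
    Sim (Ideal.span {φ u, y + φ v}) (Ideal.span {φ u', y + φ (v + hh)}) := by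
  have hN := hy.norm_one_mul v
  rw [h, map_mul] at hN
  refine ⟨y + φ (v + hh), φ u, ?_, fun h0 => hu (hy.inj h0), ?_⟩
  · intro h0
    have := (hy.indep (v + hh) 1 (by rw [map_one]; linear_combination h0)).2
    exact one_ne_zero this
  · rw [Ideal.span_mul_span', Ideal.span_mul_span', Set.singleton_mul, Set.singleton_mul,
      Set.image_pair, Set.image_pair, mul_comm _ (y + φ v), hN, Set.pair_comm,
      mul_comm _ (φ u)]

/-- Induction on `deg u`: reduction steps lower the degree until it is at most `3`. -/
lemma sim_form [IsDomain R] (hy : IsQuadOrder y) : ∀ (n : ℕ) (u v : (ZMod 2)[X]), u.natDegree = n →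
    u ≠ 0 → u ∣ v ^ 2 + v * hh + hh * gg →
    Sim (Ideal.span {φ u, y + φ v}) ⊤ ∨ Sim (Ideal.span {φ u, y + φ v}) (Ideal.span {φ hh, y}) := by
  intro n
  induction n using Nat.strong_induction_on with
  | _ n ih =>
  intro u v hn hu hdvd
  rw [span_mod]
  have hdvd' : u ∣ (v % u) ^ 2 + (v % u) * hh + hh * gg := by
    have h1 : u ∣ v - v % u := ⟨v / u, by
      linear_combination -EuclideanDomain.div_add_mod v u⟩
    -- this product is `N(y + v) - N(y + v % u)`
    have h2 : u ∣ (v - v % u) * (v + v % u + hh) := h1.mul_right _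
    have h3 := dvd_sub hdvd h2
    convert h3 using 1
    ring
  have hlt : (v % u).degree < u.degree := EuclideanDomain.mod_lt v hu
  generalize v % u = r at hdvd' hlt
  rcases Nat.lt_or_ge 3 n with h | h
  · obtain ⟨u', hu'⟩ := hdvd'
    have h0 := norm_ne_zero r
    have hu'0 : u' ≠ 0 := by rintro rfl; rw [mul_zero] at hu'; exact h0 hu'
    have hdeg := congrArg natDegree hu'
    rw [natDegree_mul hu hu'0] at hdeg
    have hr : r.natDegree < n := by
      rw [← hn]
      by_cases hr0 : r = 0
      · subst hr0; simp; omega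
      · exact natDegree_lt_natDegree hr0 hlt
    have hle : (r ^ 2 + r * hh + hh * gg).natDegree < 2 * n := by
      have e1 : (r ^ 2).natDegree ≤ 2 * r.natDegree := natDegree_pow_le
      have e2 : (r * hh).natDegree ≤ r.natDegree + 2 := by
        simpa only [natDegree_hh] using natDegree_mul_le (p := r) (q := hh)
      have e3 : (hh * gg).natDegree = 7 := by
        rw [natDegree_mul hh_ne_zero gg_ne_zero, natDegree_hh, natDegree_gg]
      refine (natDegree_add_le _ _).trans_lt (max_lt ((natDegree_add_le _ _).trans_lt
        (max_lt ?_ ?_)) ?_) <;> omega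
    have hstep := hy.sim_step hu hu'
    have hd2 : u' ∣ (r + hh) ^ 2 + (r + hh) * hh + hh * gg := by
      refine ⟨u, ?_⟩
      linear_combination hu' + (r * hh + hh ^ 2) * two_eq_zero_poly
    exact (ih _ (by omega) u' (r + hh) rfl hu'0 hd2).imp hstep.trans hstep.trans
  · rcases small_u u r hu (by omega) hlt hdvd' with rfl | ⟨rfl, rfl⟩
    · left
      refine ⟨1, 1, one_ne_zero, one_ne_zero, ?_⟩
      congr 1
      rw [Ideal.eq_top_iff_one]
      exact Ideal.subset_span (by simp)
    · right
      exact ⟨1, 1, one_ne_zero, one_ne_zero, by simp⟩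

lemma not_principal [IsDomain R] (hy : IsQuadOrder y) :
    ¬ (Ideal.span {φ hh, y} : Ideal R).IsPrincipal := by
  rintro ⟨α, hα⟩
  rw [Ideal.submodule_span_eq] at hα
  have h1 : α ∣ φ hh := Ideal.mem_span_singleton.1 (hα ▸ Ideal.subset_span (by simp))
  have h2 : α ∣ y := Ideal.mem_span_singleton.1 (hα ▸ Ideal.subset_span (by simp))
  have h3 : α ∈ Ideal.span {φ hh, y} := hα ▸ Ideal.mem_span_singleton_self α
  obtain ⟨β, hβ⟩ := h1
  obtain ⟨a, b, rfl⟩ := hy.rep α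
  obtain ⟨c, d, rfl⟩ := hy.rep β
  have hrel := hy.rel
  -- the coordinates of the product of `a + b y` and `c + d y`
  have hco : hh = a * c - b * d * (hh * gg) ∧ 0 = a * d + b * c - b * d * hh := by
    apply hy.coord_ext
    simp only [map_sub, map_add, map_mul, map_zero] at hrel ⊢
    linear_combination hβ + φ b * φ d * hrel
  -- the norm is multiplicative, and the signs are irrelevant in characteristic two
  have hN : (a ^ 2 + a * b * hh + b ^ 2 * (hh * gg)) * (c ^ 2 + c * d * hh + d ^ 2 * (hh * gg)) =
      hh ^ 2 := by
    have key : (a ^ 2 - a * b * hh + b ^ 2 * (hh * gg)) * (c ^ 2 - c * d * hh + d ^ 2 * (hh * gg)) =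
        hh ^ 2 := by
      linear_combination (-hh - (a * c - b * d * (hh * gg))) * hco.1 +
        ((a * c - b * d * (hh * gg)) * hh - (a * d + b * c - b * d * hh) * (hh * gg)) * hco.2
    simpa only [CharTwo.sub_eq_add] using key
  have hdeg := congrArg natDegree hN
  have hne := hN ▸ pow_ne_zero 2 hh_ne_zero
  rw [natDegree_mul (left_ne_zero_of_mul hne) (right_ne_zero_of_mul hne), natDegree_pow,
    natDegree_hh] at hdeg
  have hb : b = 0 := by
    by_contra hb
    have := norm_natDegree a b hb
    omega
  subst hb
  obtain ⟨t, ht⟩ := h2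
  obtain ⟨e, f, rfl⟩ := hy.rep t
  have haf : 1 = a * f := by
    refine (hy.coord_ext (a := 0) (c := a * e) ?_).2
    simp only [map_zero, map_one, map_mul] at ht ⊢
    linear_combination ht
  have h4 : (1 : R) ∈ Ideal.span {φ hh, y} := by
    have := Ideal.mul_mem_right (φ f) _ h3
    rwa [map_zero, zero_mul, add_zero, ← map_mul, ← haf, map_one] at this
  obtain ⟨r, s, hrs⟩ := Ideal.mem_span_pair.1 h4
  obtain ⟨r₀, r₁, rfl⟩ := hy.rep r
  obtain ⟨s₀, s₁, rfl⟩ := hy.rep s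
  have h5 : 1 = hh * (r₀ - s₁ * gg) := by
    refine (hy.coord_ext (b := 0) (d := r₁ * hh + s₀ - s₁ * hh) ?_).1
    simp only [map_zero, map_one, map_mul, map_sub, map_add] at hrel ⊢
    linear_combination -hrs + φ s₁ * hrel
  exact hh_prime.not_isUnit (IsUnit.of_mul_eq_one _ h5.symm)

lemma card_classGroup [IsDedekindDomain R] (hy : IsQuadOrder y) :
    Nat.card (ClassGroup R) = 2 := by
  have hP : Ideal.span {φ hh, y} ∈ nonZeroDivisors (Ideal R) := by
    rw [mem_nonZeroDivisors_iff_ne_zero]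
    intro h
    exact hy.not_principal (h ▸ bot_isPrincipal)
  rw [Nat.card_eq_two_iff]
  refine ⟨1, ClassGroup.mk0 ⟨_, hP⟩, fun h => hy.not_principal
    ((ClassGroup.mk0_eq_one_iff hP).1 h.symm), Set.eq_univ_of_forall fun x => ?_⟩
  obtain ⟨⟨I, hI⟩, rfl⟩ := ClassGroup.mk0_surjective x
  obtain ⟨c, u, v, hc, hu, hdvd, hform⟩ := hy.exists_form I (mem_nonZeroDivisors_iff_ne_zero.1 hI)
  have h1 : Sim I (Ideal.span {φ u, y + φ v}) :=
    ⟨1, φ c, one_ne_zero, fun h => hc (hy.inj h), by rw [hform]; simp⟩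
  rcases hy.sim_form _ u v rfl hu hdvd with h | h
  · left
    rw [← map_one ClassGroup.mk0, ClassGroup.mk0_eq_mk0_iff]
    obtain ⟨α, β, hα, hβ, h⟩ := h1.trans h
    exact ⟨α, β, hα, hβ, by simpa using h⟩
  · right
    rw [Set.mem_singleton_iff, ClassGroup.mk0_eq_mk0_iff]
    obtain ⟨α, β, hα, hβ, h⟩ := h1.trans h
    exact ⟨α, β, hα, hβ, h⟩

end IsQuadOrder

/-! ### The ring of integers -/

section Integers

variable {K : Type*} [Field K] [Algebra (ZMod 2)[X] K] [Algebra (RatFunc (ZMod 2)) K]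
  [IsScalarTower (ZMod 2)[X] (RatFunc (ZMod 2)) K]

lemma integral_coords_aux {z : K} {a : RatFunc (ZMod 2)} (hz : IsIntegral (ZMod 2)[X] z)
    (h : z = algebraMap (RatFunc (ZMod 2)) K a) :
    ∃ p : (ZMod 2)[X], algebraMap _ _ p = a := by
  rw [← IsIntegrallyClosed.isIntegral_iff (R := (ZMod 2)[X])]
  rw [h] at hz
  exact (isIntegral_algebraMap_iff (algebraMap (RatFunc (ZMod 2)) K).injective).1 hz

/-- An integral element of `F₂(x) ⊕ F₂(x) y` has polynomial coordinates. With `A = h a` and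
`B = h b`, the norm equation reads `A² + A B h + B² h g = h² N`, which gives first `h ∣ A` and then
`h ∣ B`. -/
lemma isIntegral_coords {y : K}
    (rel : y ^ 2 + algebraMap (ZMod 2)[X] K hh * y + algebraMap (ZMod 2)[X] K (hh * gg) = 0)
    (σ : K →ₐ[RatFunc (ZMod 2)] K) (hσ : σ y = y + algebraMap (ZMod 2)[X] K hh)
    (a b : RatFunc (ZMod 2))
    (hz : IsIntegral (ZMod 2)[X] (algebraMap _ K a + algebraMap _ K b * y)) :
    ∃ p q : (ZMod 2)[X], algebraMap _ _ p = a ∧ algebraMap _ _ q = b := by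
  have t2 : (2 : K) = 0 := by
    have := congrArg (algebraMap (ZMod 2)[X] K) two_eq_zero_poly
    rwa [map_ofNat, map_zero] at this
  set z := algebraMap _ K a + algebraMap _ K b * y with hzdef
  have hsz : σ z = algebraMap _ K a + algebraMap _ K b * (y + algebraMap (ZMod 2)[X] K hh) := by
    rw [hzdef, map_add, map_mul, AlgHom.commutes, AlgHom.commutes, hσ]
  have hz' : IsIntegral (ZMod 2)[X] (σ z) := hz.map (σ.restrictScalars (ZMod 2)[X])
  have tower : ∀ p : (ZMod 2)[X], algebraMap (ZMod 2)[X] K p =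
      algebraMap (RatFunc (ZMod 2)) K (algebraMap _ _ p) := fun p =>
    IsScalarTower.algebraMap_apply _ _ _ _
  have inj : Function.Injective (algebraMap (ZMod 2)[X] (RatFunc (ZMod 2))) :=
    IsFractionRing.injective _ _
  -- the trace is `b h`
  obtain ⟨B, hB⟩ := integral_coords_aux (a := b * algebraMap _ _ hh) (hz.add hz') (by
    rw [hsz, hzdef, map_mul, ← tower]
    linear_combination (algebraMap _ K a + algebraMap _ K b * y) * t2)
  -- the norm
  obtain ⟨N, hN⟩ := integral_coords_aux
      (a := a ^ 2 + a * b * algebraMap _ _ hh + b ^ 2 * algebraMap _ _ (hh * gg)) (hz.mul hz') (by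
    rw [hsz, hzdef]
    simp only [map_add, map_mul, map_pow, ← tower] at rel ⊢
    linear_combination (algebraMap _ K b) ^ 2 * rel + (algebraMap _ K a * algebraMap _ K b * y -
      algebraMap _ K b ^ 2 * algebraMap (ZMod 2)[X] K hh * algebraMap (ZMod 2)[X] K gg) * t2)
  have hh0 : algebraMap (ZMod 2)[X] (RatFunc (ZMod 2)) hh ≠ 0 := fun h0 =>
    hh_ne_zero (inj (by rw [h0, map_zero]))
  -- `A = h a` is a root of `T ^ 2 + h B T + (h g B ^ 2 - h ^ 2 N)`
  have hA : IsIntegral (ZMod 2)[X] (a * algebraMap _ _ hh) := by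
    refine ⟨X ^ 2 + (C (hh * B) * X + C (hh * gg * B ^ 2 - hh ^ 2 * N)), ?_, ?_⟩
    · apply monic_X_pow_add
      exact degree_linear_lt
    · simp only [eval₂_add, eval₂_mul, eval₂_pow, eval₂_X, eval₂_C, eval₂_sub, map_mul,
        map_sub, map_pow, hB, hN]
      ring
  obtain ⟨A, hA⟩ := IsIntegrallyClosed.isIntegral_iff.1 hA
  have hpoly : A ^ 2 + A * B * hh + B ^ 2 * (hh * gg) = hh ^ 2 * N := by
    apply inj
    simp only [map_add, map_mul, map_pow, hA, hB, hN]
    ring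
  have hhA : hh ∣ A := hh_prime.dvd_of_dvd_pow (n := 2)
    ⟨hh * N - A * B - B ^ 2 * gg, by linear_combination hpoly⟩
  obtain ⟨p, rfl⟩ := hhA
  have hhB : hh ∣ B ^ 2 * gg := by
    refine ⟨N - p ^ 2 - p * B, mul_left_cancel₀ hh_ne_zero ?_⟩
    linear_combination hpoly
  have hhB' : hh ∣ B := by
    rcases hh_prime.dvd_or_dvd hhB with h | h
    · exact hh_prime.dvd_of_dvd_pow h
    · exfalso
      -- `g = h (x³ + x²) + 1`
      have h1 : hh ∣ 1 := by
        obtain ⟨k, hk⟩ := h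
        refine ⟨k - X ^ 3 - X ^ 2, ?_⟩
        unfold hh gg at *
        linear_combination hk + (X ^ 4 + X ^ 3) * two_eq_zero_poly
      exact hh_prime.not_isUnit (isUnit_of_dvd_one h1)
  obtain ⟨q, rfl⟩ := hhB'
  refine ⟨p, q, mul_right_cancel₀ hh0 ?_, mul_right_cancel₀ hh0 ?_⟩
  · rw [← hA, map_mul, mul_comm]
  · rw [← hB, map_mul, mul_comm]

end Integers

lemma isQuadOrder_ringOfIntegers (f : Polynomial (RatFunc (ZMod 2)))
    (hf : f = X ^ 2 + C (algebraMap (ZMod 2)[X] _ hh) * X + C (algebraMap (ZMod 2)[X] _ (hh * gg)))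
    [Fact (Irreducible f)] :
    ∃ y : FunctionField.ringOfIntegers (ZMod 2) (AdjoinRoot f), IsQuadOrder y := by
  have tower : ∀ p : (ZMod 2)[X], algebraMap (ZMod 2)[X] (AdjoinRoot f) p =
      AdjoinRoot.of f (algebraMap _ _ p) := fun p =>
    IsScalarTower.algebraMap_apply _ (RatFunc (ZMod 2)) _ _
  have hdeg : f.natDegree = 2 := by rw [hf]; compute_degree!
  have hev : ∀ t : AdjoinRoot f, eval₂ (AdjoinRoot.of f) t f = t ^ 2 +
      algebraMap (ZMod 2)[X] _ hh * t + algebraMap (ZMod 2)[X] _ (hh * gg) := by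
    intro t
    rw [tower, tower]
    conv_lhs => rw [show eval₂ (AdjoinRoot.of f) t f = eval₂ (AdjoinRoot.of f) t (X ^ 2 +
      C (algebraMap (ZMod 2)[X] _ hh) * X + C (algebraMap (ZMod 2)[X] _ (hh * gg))) from
      congrArg _ hf]
    simp only [eval₂_add, eval₂_mul, eval₂_pow, eval₂_X, eval₂_C]
  have hrel := (hev _).symm.trans (AdjoinRoot.eval₂_root f)
  have t2 : (2 : AdjoinRoot f) = 0 := by
    have := congrArg (algebraMap (ZMod 2)[X] (AdjoinRoot f)) two_eq_zero_poly
    rwa [map_ofNat, map_zero] at this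
  -- the nontrivial automorphism
  let σ : AdjoinRoot f →ₐ[RatFunc (ZMod 2)] AdjoinRoot f :=
    AdjoinRoot.liftAlgHom f (Algebra.ofId _ _)
      (AdjoinRoot.root f + algebraMap (ZMod 2)[X] _ hh) (by
        refine (hev _).trans ?_
        linear_combination hrel + (AdjoinRoot.root f * algebraMap (ZMod 2)[X] _ hh +
          algebraMap (ZMod 2)[X] _ hh ^ 2) * t2)
  have hσ : σ (AdjoinRoot.root f) = AdjoinRoot.root f + algebraMap (ZMod 2)[X] _ hh :=
    AdjoinRoot.liftAlgHom_root ..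
  have hint : IsIntegral (ZMod 2)[X] (AdjoinRoot.root f) := by
    refine ⟨X ^ 2 + (C hh * X + C (hh * gg)), monic_X_pow_add degree_linear_lt, ?_⟩
    simp only [eval₂_add, eval₂_mul, eval₂_pow, eval₂_X, eval₂_C]
    rw [← add_assoc]
    exact hrel
  refine ⟨⟨AdjoinRoot.root f, hint⟩, ?_, ?_, ?_⟩
  · exact Subtype.ext hrel
  · rintro ⟨z, hz⟩
    obtain ⟨P, rfl⟩ := AdjoinRoot.mk_surjective z
    have hlt : (P % f).natDegree ≤ 1 := by
      have := natDegree_mod_lt P (q := f) (by omega)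
      omega
    obtain ⟨b, a, hab⟩ := exists_eq_X_add_C_of_natDegree_le_one hlt
    have hPz : AdjoinRoot.mk f P = algebraMap _ _ a + algebraMap _ _ b * AdjoinRoot.root f := by
      rw [← EuclideanDomain.div_add_mod P f, map_add, map_mul, AdjoinRoot.mk_self, zero_mul,
        zero_add, hab, map_add, map_mul, AdjoinRoot.mk_X, AdjoinRoot.mk_C, AdjoinRoot.mk_C,
        AdjoinRoot.algebraMap_eq, add_comm]
    have hz' : IsIntegral (ZMod 2)[X] (AdjoinRoot.mk f P) := hz
    rw [hPz] at hz'
    obtain ⟨p, q, rfl, rfl⟩ := isIntegral_coords hrel σ hσ a b hz'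
    refine ⟨p, q, Subtype.ext (hPz.trans ?_)⟩
    rw [AdjoinRoot.algebraMap_eq, ← tower, ← tower]
    rfl
  · intro a b hab
    have h1 : algebraMap (ZMod 2)[X] (AdjoinRoot f) a +
      algebraMap (ZMod 2)[X] (AdjoinRoot f) b * AdjoinRoot.root f = 0 := congrArg Subtype.val hab
    rw [tower, tower, ← AdjoinRoot.mk_C, ← AdjoinRoot.mk_C, ← AdjoinRoot.mk_X, ← map_mul,
      ← map_add, AdjoinRoot.mk_eq_zero] at h1
    have h2 := eq_zero_of_dvd_of_degree_lt h1 (by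
      rw [add_comm, degree_eq_natDegree (Fact.out : Irreducible f).ne_zero, hdeg]
      exact degree_linear_lt)
    have inj : Function.Injective (algebraMap (ZMod 2)[X] (RatFunc (ZMod 2))) :=
      IsFractionRing.injective _ _
    constructor
    · apply inj
      simpa using congrArg (coeff · 0) h2
    · apply inj
      simpa using congrArg (coeff · 1) h2

theorem class_group_statement_6
    (f : Polynomial (RatFunc (ZMod 2)))
    (hf : f = X ^ 2 + C (RatFunc.X ^ 2 + RatFunc.X + 1) * X + C ((RatFunc.X ^ 2 + RatFunc.X + 1) * (RatFunc.X ^ 5 + RatFunc.X ^ 2 + 1)))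
    [Fact (Irreducible f)] :
    IsCyclic (ClassGroup (FunctionField.ringOfIntegers (ZMod 2) (AdjoinRoot f))) ∧
      Nat.card (ClassGroup (FunctionField.ringOfIntegers (ZMod 2) (AdjoinRoot f))) = 2 := by
  have hf0 : f ≠ 0 := (Fact.out : Irreducible f).ne_zero
  have : Module.Finite (RatFunc (ZMod 2)) (AdjoinRoot f) :=
    (AdjoinRoot.powerBasis hf0).finite
  obtain ⟨y, hy⟩ := isQuadOrder_ringOfIntegers f (by
    rw [hf]; simp [hh, gg, RatFunc.algebraMap_X])
  have : FunctionField (ZMod 2) (AdjoinRoot f) := this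
  have : Module.Finite (ZMod 2)[X] (FunctionField.ringOfIntegers (ZMod 2) (AdjoinRoot f)) := by
    refine ⟨⟨{1, y}, eq_top_iff.2 fun r _ => ?_⟩⟩
    obtain ⟨a, b, rfl⟩ := hy.rep r
    rw [Finset.coe_insert, Finset.coe_singleton, Submodule.mem_span_pair]
    exact ⟨a, b, by rw [Algebra.smul_def, Algebra.smul_def, mul_one]⟩
  have : IsNoetherianRing (FunctionField.ringOfIntegers (ZMod 2) (AdjoinRoot f)) :=
    IsNoetherianRing.of_finite (ZMod 2)[X] _
  have : Ring.DimensionLEOne (FunctionField.ringOfIntegers (ZMod 2) (AdjoinRoot f)) :=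
    Ring.DimensionLEOne.integralClosure _ _
  have : IsDedekindDomain (FunctionField.ringOfIntegers (ZMod 2) (AdjoinRoot f)) := { }
  have hcard := hy.card_classGroup
  have : Fact (Nat.Prime 2) := ⟨Nat.prime_two⟩
  exact ⟨isCyclic_of_prime_card hcard, hcard⟩
end
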